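/- arXiv:2306.05932 — 3 statements merged into one kernel-verified Lean document; each statement's English description precedes it below -/
import Mathlib

section
/- Let n₁, …, n_k be positive integers, d₁, …, d_k nonnegative integers, n = n₁ + ⋯ + n_k, and N = ∏_i C(n_i + d_i, n_i). For any points a₁, …, a_z, each a tuple in ∏_i (ℂ^{n_i+1}∖{0}), the ℂ-vector space of multihomogeneous polynomials of multidegree (d₁, …, d_k) vanishing to order ≥ 2 at each a_j has dimension at least N − z(n+1). (Each double point imposes at most n+1 linear conditions, because the Euler relations of the k gradings make the k radial derivative conditions coincide, up to scalar, with the single condition f(a_j) = 0.) -/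
open MvPolynomial

noncomputable section

/-- The space of multihomogeneous polynomials of multidegree `d` in `k` groups of
variables, the `i`-th group having `n i + 1` variables. -/
def multiHomog {k : ℕ} (n d : Fin k → ℕ) :
    Submodule ℂ (MvPolynomial ((i : Fin k) × Fin (n i + 1)) ℂ) :=
  weightedHomogeneousSubmodule ℂ (fun v => (Pi.single v.1 1 : Fin k → ℕ)) d

/-- The space of polynomials vanishing at the point `p`. -/
def vanishingAt {k : ℕ} (n : Fin k → ℕ) (p : (i : Fin k) → Fin (n i + 1) → ℂ) :
    Submodule ℂ (MvPolynomial ((i : Fin k) × Fin (n i + 1)) ℂ) :=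
  LinearMap.ker ((aeval (fun v : (i : Fin k) × Fin (n i + 1) => p v.1 v.2)).toLinearMap :
    MvPolynomial ((i : Fin k) × Fin (n i + 1)) ℂ →ₗ[ℂ] ℂ)

/-- The space of polynomials vanishing to order `≥ 2` at the point `p`:
the polynomial and all its first-order partial derivatives vanish at `p`. -/
def doubleVanishingAt {k : ℕ} (n : Fin k → ℕ) (p : (i : Fin k) → Fin (n i + 1) → ℂ) :
    Submodule ℂ (MvPolynomial ((i : Fin k) × Fin (n i + 1)) ℂ) :=
  vanishingAt n p ⊓ ⨅ v : (i : Fin k) × Fin (n i + 1),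
    Submodule.comap (pderiv v).toLinearMap (vanishingAt n p)

/-- The space of multihomogeneous polynomials of multidegree `d` vanishing to order `≥ 2`
at each of the points `a j`. -/
def doubleVanishingSpace {k : ℕ} (n d : Fin k → ℕ) {z : ℕ}
    (a : Fin z → (i : Fin k) → Fin (n i + 1) → ℂ) :
    Submodule ℂ (MvPolynomial ((i : Fin k) × Fin (n i + 1)) ℂ) :=
  multiHomog n d ⊓ ⨅ j, doubleVanishingAt n (a j)


/-- Coordinates of the multi-weight of a monomial. -/
lemma weight_multi_apply {k : ℕ} (n : Fin k → ℕ)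
    (m : ((i : Fin k) × Fin (n i + 1)) →₀ ℕ) (i : Fin k) :
    Finsupp.weight (fun v : (i : Fin k) × Fin (n i + 1) => (Pi.single v.1 1 : Fin k → ℕ)) m i
      = ∑ l, m ⟨i, l⟩ := by
  rw [Finsupp.weight_apply, Finsupp.sum_fintype _ _ (by simp), Finset.sum_apply,
    Fintype.sum_sigma, Finset.sum_eq_single i]
  · simp
  · intro b _ hb
    simp [hb.symm]
  · simp

/-- Exponent vectors of multidegree `d` are tuples of exponent vectors of degrees `d i`. -/
def expEquiv {k : ℕ} (n d : Fin k → ℕ) :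
    {m : ((i : Fin k) × Fin (n i + 1)) →₀ ℕ |
      Finsupp.weight (fun v => (Pi.single v.1 1 : Fin k → ℕ)) m = d} ≃
    ((i : Fin k) → (Finset.univ : Finset (Fin (n i + 1))).finsuppAntidiag (d i)) :=
  ((Finsupp.sigmaFinsuppEquivPiFinsupp).subtypeEquiv (by
    intro m
    change _ ↔ ∀ i, _ ∈ (Finset.univ : Finset (Fin (n i + 1))).finsuppAntidiag (d i)
    rw [Set.mem_ofPred, funext_iff]
    refine forall_congr' fun i => ?_
    rw [weight_multi_apply]
    rw [Finset.mem_finsuppAntidiag]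
    exact ⟨fun h => ⟨h, Finset.subset_univ _⟩, fun h => h.1⟩)).trans Equiv.subtypePiEquivPi

lemma multiHomog_basis {k : ℕ} (n d : Fin k → ℕ) :
    Nonempty (Module.Basis
      ((i : Fin k) → (Finset.univ : Finset (Fin (n i + 1))).finsuppAntidiag (d i)) ℂ
      (multiHomog n d)) := by
  unfold multiHomog
  rw [weightedHomogeneousSubmodule_eq_finsupp_supported]
  exact ⟨(basisRestrictSupport ℂ _).reindex (expEquiv n d)⟩

lemma multiHomog_finite {k : ℕ} (n d : Fin k → ℕ) : Module.Finite ℂ (multiHomog n d) := by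
  obtain ⟨b⟩ := multiHomog_basis n d
  exact Module.Finite.of_basis b

lemma multiHomog_finrank {k : ℕ} (n d : Fin k → ℕ) :
    Module.finrank ℂ (multiHomog n d) = ∏ i, Nat.choose (n i + d i) (n i) := by
  obtain ⟨b⟩ := multiHomog_basis n d
  rw [Module.finrank_eq_card_basis b, Fintype.card_pi]
  refine Finset.prod_congr rfl fun i _ => ?_
  rw [Fintype.card_coe, Finset.card_finsuppAntidiag_nat_eq_choose, Finset.card_univ,
    Fintype.card_fin, show n i + 1 + d i - 1 = n i + d i by omega, Nat.choose_symm_add]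

/-- Euler's relation for the `i`-th grading. -/
lemma euler_group {k : ℕ} (n d : Fin k → ℕ) (f : MvPolynomial ((i : Fin k) × Fin (n i + 1)) ℂ)
    (hf : f ∈ multiHomog n d) (i : Fin k) :
    ∑ l, X ⟨i, l⟩ * pderiv ⟨i, l⟩ f = d i • f := by
  have h : f.IsWeightedHomogeneous
      (fun v : (i : Fin k) × Fin (n i + 1) => (Pi.single v.1 1 : Fin k → ℕ) i) (d i) := by
    intro m hm
    have := congrFun (hf hm) i
    rw [weight_multi_apply] at this
    rw [← this, ← weight_multi_apply, Finsupp.weight_apply, Finsupp.weight_apply,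
      Finsupp.sum, Finsupp.sum, Finset.sum_apply]
    rfl
  rw [← h.sum_weight_X_mul_pderiv, Fintype.sum_sigma, Finset.sum_eq_single i]
  · simp
  · intro b _ hb
    simp [hb.symm]
  · simp

/-- The `n + 1` linear conditions at a point, `c i` being a coordinate to be skipped. -/
def condMap {k : ℕ} (n : Fin k → ℕ) (p : (i : Fin k) → Fin (n i + 1) → ℂ)
    (c : (i : Fin k) → Fin (n i + 1)) :
    MvPolynomial ((i : Fin k) × Fin (n i + 1)) ℂ →ₗ[ℂ]
      (Option ((i : Fin k) × Fin (n i)) → ℂ) :=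
  LinearMap.pi fun o => (aeval (fun v : (i : Fin k) × Fin (n i + 1) => p v.1 v.2)).toLinearMap ∘ₗ
    o.elim LinearMap.id (fun v => (pderiv ⟨v.1, (c v.1).succAbove v.2⟩).toLinearMap)

lemma mem_doubleVanishingAt {k : ℕ} (n d : Fin k → ℕ) (p : (i : Fin k) → Fin (n i + 1) → ℂ)
    (c : (i : Fin k) → Fin (n i + 1)) (hc : ∀ i, p i (c i) ≠ 0)
    (f : MvPolynomial ((i : Fin k) × Fin (n i + 1)) ℂ) (hf : f ∈ multiHomog n d)
    (h : condMap n p c f = 0) : f ∈ doubleVanishingAt n p := by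
  have h0 : aeval (fun v : (i : Fin k) × Fin (n i + 1) => p v.1 v.2) f = 0 := congrFun h none
  have h1 : ∀ (i : Fin k) (l : Fin (n i)),
      aeval (fun v : (i : Fin k) × Fin (n i + 1) => p v.1 v.2)
        (pderiv ⟨i, (c i).succAbove l⟩ f) = 0 := fun i l => congrFun h (some ⟨i, l⟩)
  refine Submodule.mem_inf.2 ⟨h0, (Submodule.mem_iInf _).2 ?_⟩
  rintro ⟨i, l⟩
  change aeval (fun v : (i : Fin k) × Fin (n i + 1) => p v.1 v.2) (pderiv ⟨i, l⟩ f) = 0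
  rcases Fin.eq_self_or_eq_succAbove (c i) l with rfl | ⟨l, rfl⟩
  · have e := congrArg (aeval (fun v : (i : Fin k) × Fin (n i + 1) => p v.1 v.2))
      (euler_group n d f hf i)
    rw [map_sum, map_nsmul, h0, smul_zero, Fin.sum_univ_succAbove _ (c i)] at e
    simp only [map_mul, h1, mul_zero, Finset.sum_const_zero, add_zero, aeval_X] at e
    exact (mul_eq_zero.1 e).resolve_left (hc i)
  · exact h1 i l

/-- Each double point imposes at most `n + 1` conditions: for any points
`a₁, …, a_z`, each a tuple of nonzero vectors, the space of multihomogeneous polynomials of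
multidegree `d` vanishing to order `≥ 2` at each `a j` has dimension at least
`N - z * (n + 1)`, where `N = ∏ᵢ C(nᵢ + dᵢ, nᵢ)` and `n = ∑ᵢ nᵢ`. -/
theorem doubleVanishingSpace_dim_ge
    (k : ℕ) (hk : 1 ≤ k) (n d : Fin k → ℕ) (hn : ∀ i, 1 ≤ n i)
    (z : ℕ) (a : Fin z → (i : Fin k) → Fin (n i + 1) → ℂ)
    (ha : ∀ j i, a j i ≠ 0) :
    ((∏ i, Nat.choose (n i + d i) (n i) : ℕ) : ℤ) - z * ((∑ i, n i) + 1) ≤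
      (Module.finrank ℂ (doubleVanishingSpace n d a) : ℤ) := by
  have hc : ∀ j i, ∃ l, a j i l ≠ 0 := fun j i => Function.ne_iff.1 (ha j i)
  choose c hc using hc
  have := multiHomog_finite n d
  let L : multiHomog n d →ₗ[ℂ] (Fin z → Option ((i : Fin k) × Fin (n i)) → ℂ) :=
    (LinearMap.pi fun j => condMap n (a j) (c j)) ∘ₗ (multiHomog n d).subtype
  have hle : (LinearMap.ker L).map (multiHomog n d).subtype ≤ doubleVanishingSpace n d a := by
    rintro _ ⟨f, hf, rfl⟩
    refine Submodule.mem_inf.2 ⟨f.2, (Submodule.mem_iInf _).2 fun j => ?_⟩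
    exact mem_doubleVanishingAt n d (a j) (c j) (hc j) f f.2 (congrFun hf j)
  have hfin : Module.Finite ℂ (doubleVanishingSpace n d a) :=
    Submodule.finiteDimensional_of_le (S₂ := multiHomog n d) inf_le_left
  have h1 := Submodule.finrank_mono hle
  rw [Submodule.finrank_map_subtype_eq] at h1
  have h2 := L.finrank_range_add_finrank_ker
  have h3 := (LinearMap.range L).finrank_le
  rw [Module.finrank_pi_fintype] at h3
  simp only [Module.finrank_fintype_fun_eq_card, Fintype.card_option, Fintype.card_sigma,
    Fintype.card_fin, Finset.sum_const, Finset.card_univ, smul_eq_mul] at h3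
  rw [multiHomog_finrank] at h2
  have h4 : ∏ i, Nat.choose (n i + d i) (n i) ≤
      z * ((∑ i, n i) + 1) + Module.finrank ℂ (doubleVanishingSpace n d a) := by omega
  have h5 : ((∏ i, Nat.choose (n i + d i) (n i) : ℕ) : ℤ) ≤
      ((z * ((∑ i, n i) + 1) + Module.finrank ℂ (doubleVanishingSpace n d a) : ℕ) : ℤ) :=
    Int.ofNat_le.2 h4
  push_cast at h5 ⊢
  linarith
end
end

section
/- For every integer a ≥ 1 there exist points a₁, …, a_{2a+1} ∈ (ℂ²∖{0}) × (ℂ²∖{0}) such that the ℂ-vector space of bihomogeneous polynomials of bidegree (2a, 2) vanishing to order ≥ 2 at each a_j has dimension exactly 1; the unique (up to scalar) such polynomial is T², where T is the unique (up to scalar) bidegree-(a,1) form vanishing at all the points. -/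
open MvPolynomial

noncomputable section

/-- Dimension vector of `ℙ¹ × ℙ¹`: two groups of `2` variables each. -/
def biDims : Fin 2 → ℕ := fun _ => 1

abbrev VV := (i : Fin 2) × Fin (biDims i + 1)

abbrev x0v : VV := ⟨0, (0 : Fin 2)⟩
abbrev x1v : VV := ⟨0, (1 : Fin 2)⟩
abbrev y0v : VV := ⟨1, (0 : Fin 2)⟩
abbrev y1v : VV := ⟨1, (1 : Fin 2)⟩

/-- The affine point `(1, u; 1, w)`. -/
def affPt {R : Type*} [CommRing R] (u w : R) (i : Fin 2) : Fin (biDims i + 1) → R :=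
  (![![1, u], ![1, w]] i : Fin 2 → R)

lemma VV_cases {P : VV → Prop} (h0 : P x0v) (h1 : P x1v) (h2 : P y0v) (h3 : P y1v) (v : VV) :
    P v := by
  obtain ⟨i, j⟩ := v
  change Fin 2 at j
  fin_cases i <;> fin_cases j
  · exact h0
  · exact h1
  · exact h2
  · exact h3

lemma VV_sum {M : Type*} [AddCommMonoid M] (f : VV → M) :
    ∑ v, f v = f x0v + f x1v + f y0v + f y1v := by
  rw [Fintype.sum_sigma, Fin.sum_univ_two]
  have h0 : ∀ g : Fin (biDims 0 + 1) → M, ∑ j, g j = g (0 : Fin 2) + g (1 : Fin 2) :=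
    fun g => Fin.sum_univ_two (f := g)
  have h1 : ∀ g : Fin (biDims 1 + 1) → M, ∑ j, g j = g (0 : Fin 2) + g (1 : Fin 2) :=
    fun g => Fin.sum_univ_two (f := g)
  rw [h0, h1, ← add_assoc]

lemma VV_prod {M : Type*} [CommMonoid M] (f : VV → M) :
    ∏ v, f v = f x0v * f x1v * f y0v * f y1v :=
  VV_sum (M := Additive M) f

/-- Dehomogenization. -/
def dehom : MvPolynomial VV ℂ →ₐ[ℂ] Polynomial (Polynomial ℂ) :=
  aeval (fun v => affPt (Polynomial.C Polynomial.X) Polynomial.X v.1 v.2)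

/-- Restriction to the curve `w = s ^ a`. -/
def restr (a : ℕ) : MvPolynomial VV ℂ →ₐ[ℂ] Polynomial ℂ :=
  aeval (fun v => affPt Polynomial.X (Polynomial.X ^ a) v.1 v.2)

lemma eval_dehom (a : ℕ) (F : MvPolynomial VV ℂ) :
    Polynomial.eval (Polynomial.X ^ a) (dehom F) = restr a F := by
  induction F using MvPolynomial.induction_on with
  | C c => simp [dehom, restr, Polynomial.algebraMap_apply]
  | add p q hp hq => simp [hp, hq]
  | mul_X p v hp =>
    rw [map_mul, map_mul, Polynomial.eval_mul, hp]
    congr 1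
    simp only [dehom, restr, aeval_X]
    revert v
    exact VV_cases (by simp [affPt]) (by simp [affPt]) (by simp [affPt]) (by simp [affPt])

lemma eval_restr (a : ℕ) (t : ℂ) (F : MvPolynomial VV ℂ) :
    Polynomial.eval t (restr a F) = aeval (fun v : VV => affPt t (t ^ a) v.1 v.2) F := by
  induction F using MvPolynomial.induction_on with
  | C c => simp [restr]
  | add p q hp hq => simp [hp, hq]
  | mul_X p v hp =>
    rw [map_mul, map_mul, Polynomial.eval_mul, hp]
    congr 1
    simp only [restr, aeval_X]
    revert v
    exact VV_cases (by simp [affPt]) (by simp [affPt]) (by simp [affPt]) (by simp [affPt])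

lemma deriv_restr (a : ℕ) (F : MvPolynomial VV ℂ) :
    Polynomial.derivative (restr a F) =
      ∑ v, restr a (pderiv v F) * Polynomial.derivative (restr a (X v)) := by
  induction F using MvPolynomial.induction_on with
  | C c => simp [restr]
  | add p q hp hq => simp [hp, hq, add_mul, Finset.sum_add_distrib]
  | mul_X p v hp =>
    simp only [Derivation.leibniz, map_add, smul_eq_mul, map_mul, Polynomial.derivative_mul, hp,
      add_mul, Finset.sum_add_distrib]
    rw [add_comm]
    congr 1
    · rw [Finset.sum_eq_single v]
      · simp
      · intro b _ hb
        simp [pderiv_X_of_ne hb.symm]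
      · simp
    · rw [Finset.sum_mul]
      exact Finset.sum_congr rfl fun _ _ => by ring

lemma deriv_dehom (F : MvPolynomial VV ℂ) :
    Polynomial.derivative (dehom F) = dehom (pderiv y1v F) := by
  induction F using MvPolynomial.induction_on with
  | C c => simp [dehom, Polynomial.algebraMap_apply]
  | add p q hp hq => simp [hp, hq]
  | mul_X p v hp =>
    simp only [Derivation.leibniz, map_add, smul_eq_mul, map_mul, Polynomial.derivative_mul, hp]
    rw [add_comm, mul_comm (dehom (X v))]
    suffices h : ∀ v, Polynomial.derivative (dehom (X v)) = dehom (pderiv y1v (X v)) by rw [h]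
    refine VV_cases ?_ ?_ ?_ ?_
    · rw [pderiv_X_of_ne (by decide)]; simp [dehom, affPt]
    · rw [pderiv_X_of_ne (by decide)]; simp [dehom, affPt]
    · rw [pderiv_X_of_ne (by decide)]; simp [dehom, affPt]
    · simp [dehom, affPt]

lemma dehom_monomial (m : VV →₀ ℕ) (c : ℂ) :
    dehom (monomial m c) =
      Polynomial.monomial (m y1v) (Polynomial.monomial (m x1v) c) := by
  rw [dehom, aeval_monomial, Finsupp.prod_fintype _ _ (by simp), VV_prod]
  simp [affPt, Polynomial.algebraMap_apply, ← Polynomial.C_mul_X_pow_eq_monomial, mul_assoc]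

lemma coeff_dehom (F : MvPolynomial VV ℂ) (i j : ℕ) :
    ((dehom F).coeff j).coeff i =
      ∑ m ∈ F.support, if m y1v = j ∧ m x1v = i then F.coeff m else 0 := by
  conv_lhs => rw [F.as_sum]
  simp only [map_sum, dehom_monomial, Polynomial.finsetSum_coeff, Polynomial.coeff_monomial]
  refine Finset.sum_congr rfl fun m _ => ?_
  by_cases h : m y1v = j <;> simp [h, Polynomial.coeff_monomial]

lemma multiHomog_deg {d : Fin 2 → ℕ} {F : MvPolynomial VV ℂ} (hF : F ∈ multiHomog biDims d)
    {m : VV →₀ ℕ} (hm : m ∈ F.support) :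
    m x0v + m x1v = d 0 ∧ m y0v + m y1v = d 1 := by
  have h := hF (mem_support_iff.1 hm)
  rw [Finsupp.weight_apply, Finsupp.sum_fintype _ _ (by simp), VV_sum] at h
  exact ⟨by simpa using congrFun h 0, by simpa using congrFun h 1⟩

lemma dehom_inj {d : Fin 2 → ℕ} {F : MvPolynomial VV ℂ} (hF : F ∈ multiHomog biDims d)
    (h : dehom F = 0) : F = 0 := by
  by_contra hne
  obtain ⟨m, hm⟩ := support_nonempty.2 hne
  have h1 := coeff_dehom F (m x1v) (m y1v)
  rw [h, Finset.sum_eq_single m] at h1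
  · simp at h1
    exact mem_support_iff.1 hm h1.symm
  · intro b hb hbm
    rw [if_neg]
    rintro ⟨e1, e2⟩
    apply hbm
    have q1 := multiHomog_deg hF hm
    have q2 := multiHomog_deg hF hb
    ext v
    revert v
    exact VV_cases (by omega) e2 (by omega) e1
  · exact fun h' => absurd hm h'

lemma dehom_coeff_eq_zero {d : Fin 2 → ℕ} {F : MvPolynomial VV ℂ} (hF : F ∈ multiHomog biDims d)
    {j : ℕ} (hj : d 1 < j) : (dehom F).coeff j = 0 := by
  ext i
  rw [coeff_dehom]
  refine Finset.sum_eq_zero fun m hm => if_neg ?_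
  have := multiHomog_deg hF hm
  omega

lemma dehom_coeff_natDegree {d : Fin 2 → ℕ} {F : MvPolynomial VV ℂ}
    (hF : F ∈ multiHomog biDims d) (j : ℕ) : ((dehom F).coeff j).natDegree ≤ d 0 := by
  rw [Polynomial.natDegree_le_iff_coeff_eq_zero]
  intro i hi
  rw [coeff_dehom]
  refine Finset.sum_eq_zero fun m hm => if_neg ?_
  have := multiHomog_deg hF hm
  omega

lemma eq_zero_of_roots {n : ℕ} (q : Polynomial ℂ) (hq : q.natDegree < n)
    (h : ∀ j : Fin n, q.eval ((j : ℕ) : ℂ) = 0) : q = 0 := by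
  refine Polynomial.eq_zero_of_natDegree_lt_card_of_eval_eq_zero q
    (f := fun j : Fin n => ((j : ℕ) : ℂ)) ?_ h (by simpa using hq)
  intro i j hij
  exact Fin.ext (by simpa using hij)

lemma eq_zero_of_double_roots {n : ℕ} (q : Polynomial ℂ) (hq : q.natDegree < 2 * n)
    (h : ∀ j : Fin n, q.eval ((j : ℕ) : ℂ) = 0)
    (h' : ∀ j : Fin n, q.derivative.eval ((j : ℕ) : ℂ) = 0) : q = 0 := by
  by_contra hne
  have key : (∏ j : Fin n, (Polynomial.X - Polynomial.C ((j : ℕ) : ℂ)) ^ 2) ∣ q := by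
    refine Finset.prod_dvd_of_coprime ?_ ?_
    · intro i _ j _ hij
      refine IsCoprime.pow (Polynomial.isCoprime_X_sub_C_of_isUnit_sub ?_)
      rw [isUnit_iff_ne_zero, sub_ne_zero]
      intro e
      exact hij (Fin.ext (by simpa using e))
    · intro j _
      rw [← Polynomial.le_rootMultiplicity_iff hne]
      exact (Polynomial.one_lt_rootMultiplicity_iff_isRoot hne).2 ⟨h j, h' j⟩
  have := Polynomial.natDegree_le_of_dvd key hne
  rw [Polynomial.natDegree_prod _ _ (fun j _ => pow_ne_zero _ (Polynomial.X_sub_C_ne_zero _))] at this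
  simp only [Polynomial.natDegree_pow, Polynomial.natDegree_X_sub_C, Finset.sum_const,
    Finset.card_univ, Fintype.card_fin, smul_eq_mul] at this
  omega

/-- The curve. -/
def curveT (a : ℕ) : MvPolynomial VV ℂ := X y1v * X x0v ^ a - X y0v * X x1v ^ a

lemma dehom_curveT (a : ℕ) :
    dehom (curveT a) = Polynomial.X - Polynomial.C (Polynomial.X ^ a) := by
  simp [dehom, curveT, affPt]

lemma curveT_ne_zero (a : ℕ) : curveT a ≠ 0 := by
  intro h
  have := dehom_curveT a
  rw [h, map_zero] at this
  exact Polynomial.X_sub_C_ne_zero _ this.symm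

lemma curveT_mem (a : ℕ) : curveT a ∈ multiHomog biDims ![a, 1] := by
  have hX := fun v : VV => isWeightedHomogeneous_X ℂ (fun v : VV => (Pi.single v.1 1 : Fin 2 → ℕ)) v
  refine Submodule.sub_mem _ ?_ ?_
  · change IsWeightedHomogeneous _ _ _
    convert (hX y1v).mul ((hX x0v).pow a) using 1
    ext i; fin_cases i <;> simp
  · change IsWeightedHomogeneous _ _ _
    convert (hX y0v).mul ((hX x1v).pow a) using 1
    ext i; fin_cases i <;> simp

lemma curveT_sq_mem (a : ℕ) : curveT a ^ 2 ∈ multiHomog biDims ![2 * a, 2] := by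
  have h : IsWeightedHomogeneous _ _ _ := curveT_mem a
  change IsWeightedHomogeneous _ _ _
  convert h.pow 2 using 1
  ext i; fin_cases i <;> simp

lemma mem_vanishingAt_iff (a : ℕ) (t : ℂ) (F : MvPolynomial VV ℂ) :
    F ∈ vanishingAt biDims (affPt t (t ^ a)) ↔ (restr a F).eval t = 0 := by
  rw [eval_restr]
  rfl

lemma restr_curveT (a : ℕ) : restr a (curveT a) = 0 := by
  rw [← eval_dehom, dehom_curveT]; simp

/-- Cancelling `X ^ a` in a degree bound. -/
lemma natDegree_le_of_mul_X_pow {a n : ℕ} {q : Polynomial ℂ}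
    (h : (q * Polynomial.X ^ a).natDegree ≤ n + a) : q.natDegree ≤ n := by
  by_cases hq : q = 0
  · simp [hq]
  · rw [Polynomial.natDegree_mul_X_pow a hq] at h
    omega

lemma natDegree_mul_X_pow_bound {a n : ℕ} {q : Polynomial ℂ} (h : q.natDegree ≤ n) :
    (q * Polynomial.X ^ a).natDegree ≤ n + a :=
  Polynomial.natDegree_mul_le_of_le h (Polynomial.natDegree_X_pow_le a)

lemma uniq_T (a : ℕ) (F : MvPolynomial VV ℂ) (hF : F ∈ multiHomog biDims ![a, 1])
    (hv : ∀ j : Fin (2 * a + 1), (restr a F).eval ((j : ℕ) : ℂ) = 0) :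
    ∃ c : ℂ, F = c • curveT a := by
  obtain ⟨A, hA⟩ : ∃ A, A = (dehom F).coeff 0 := ⟨_, rfl⟩
  obtain ⟨B, hB⟩ : ∃ B, B = (dehom F).coeff 1 := ⟨_, rfl⟩
  have dA : A.natDegree ≤ a := hA ▸ dehom_coeff_natDegree hF 0
  have dB : B.natDegree ≤ a := hB ▸ dehom_coeff_natDegree hF 1
  have e : dehom F = Polynomial.C A + Polynomial.C B * Polynomial.X := by
    ext1 j
    rcases j with _ | _ | j
    · simp [hA]
    · simp [hB, Polynomial.coeff_C]
    · rw [dehom_coeff_eq_zero hF (by simp)]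
      simp [Polynomial.coeff_C, Polynomial.coeff_X]
  have r : restr a F = A + B * Polynomial.X ^ a := by
    rw [← eval_dehom, e]; simp
  have r0 : restr a F = 0 := by
    refine eq_zero_of_roots _ ?_ hv
    rw [r]
    have := Polynomial.natDegree_add_le_of_degree_le (dA.trans (Nat.le_add_left a a))
      (natDegree_mul_X_pow_bound (a := a) dB)
    omega
  rw [r] at r0
  have dB0 : B.natDegree ≤ 0 := by
    refine natDegree_le_of_mul_X_pow (a := a) ?_
    rw [eq_neg_of_add_eq_zero_right r0, Polynomial.natDegree_neg]
    omega
  obtain ⟨c, rfl⟩ := Polynomial.natDegree_eq_zero.1 (Nat.le_zero.1 dB0)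
  refine ⟨c, sub_eq_zero.1 (dehom_inj (Submodule.sub_mem _ hF
    (Submodule.smul_mem _ c (curveT_mem a))) ?_)⟩
  rw [map_sub, map_smul, dehom_curveT, e, eq_neg_of_add_eq_zero_left r0, Algebra.smul_def,
    Polynomial.algebraMap_apply, Polynomial.algebraMap_eq]
  simp only [map_neg, map_mul]
  ring

lemma uniq_sq (a : ℕ) (F : MvPolynomial VV ℂ) (hF : F ∈ multiHomog biDims ![2 * a, 2])
    (hv : ∀ j : Fin (2 * a + 1), (restr a F).eval ((j : ℕ) : ℂ) = 0)
    (hd : ∀ (j : Fin (2 * a + 1)) (v : VV), (restr a (pderiv v F)).eval ((j : ℕ) : ℂ) = 0) :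
    ∃ c : ℂ, F = c • curveT a ^ 2 := by
  obtain ⟨A, hA⟩ : ∃ A, A = (dehom F).coeff 0 := ⟨_, rfl⟩
  obtain ⟨B, hB⟩ : ∃ B, B = (dehom F).coeff 1 := ⟨_, rfl⟩
  obtain ⟨D, hD⟩ : ∃ D, D = (dehom F).coeff 2 := ⟨_, rfl⟩
  have dA : A.natDegree ≤ 2 * a := hA ▸ dehom_coeff_natDegree hF 0
  have dB : B.natDegree ≤ 2 * a := hB ▸ dehom_coeff_natDegree hF 1
  have dD : D.natDegree ≤ 2 * a := hD ▸ dehom_coeff_natDegree hF 2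
  have e : dehom F = Polynomial.C A + Polynomial.C B * Polynomial.X
      + Polynomial.C D * Polynomial.X ^ 2 := by
    ext1 j
    rcases j with _ | _ | _ | j
    · simp [hA]
    · simp [hB, Polynomial.coeff_C, Polynomial.coeff_X_pow]
    · simp [hD, Polynomial.coeff_C, Polynomial.coeff_X]
    · rw [dehom_coeff_eq_zero hF (by simp)]
      simp [Polynomial.coeff_C, Polynomial.coeff_X, Polynomial.coeff_X_pow]
  obtain ⟨E, hE⟩ : ∃ E, E = B + D * Polynomial.X ^ a := ⟨_, rfl⟩
  have dE : E.natDegree ≤ 2 * a + a := by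
    rw [hE]
    exact Polynomial.natDegree_add_le_of_degree_le (by omega) (natDegree_mul_X_pow_bound dD)
  have r : restr a F = A + E * Polynomial.X ^ a := by
    rw [← eval_dehom, e, hE]; simp; ring
  have r0 : restr a F = 0 := by
    refine eq_zero_of_double_roots _ ?_ hv ?_
    · rw [r]
      have := Polynomial.natDegree_add_le_of_degree_le (dA.trans (by omega : 2 * a ≤ 2 * a + a + a))
        (natDegree_mul_X_pow_bound (a := a) dE)
      omega
    · intro j
      rw [deriv_restr, Polynomial.eval_finsetSum]
      exact Finset.sum_eq_zero fun v _ => by rw [Polynomial.eval_mul, hd, zero_mul]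
  rw [r] at r0
  have dE1 : E.natDegree ≤ a := by
    refine natDegree_le_of_mul_X_pow (a := a) ?_
    rw [eq_neg_of_add_eq_zero_right r0, Polynomial.natDegree_neg]
    omega
  have dD1 : D.natDegree ≤ a := by
    refine natDegree_le_of_mul_X_pow (a := a) ?_
    have : D * Polynomial.X ^ a = E - B := by rw [hE]; ring
    rw [this]
    exact (Polynomial.natDegree_sub_le_of_le dE1 dB).trans (by simp; omega)
  have h : restr a (pderiv y1v F) = E + D * Polynomial.X ^ a := by
    rw [← eval_dehom, ← deriv_dehom, e, hE]; simp; ring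
  have h0 : restr a (pderiv y1v F) = 0 := by
    refine eq_zero_of_roots _ ?_ (fun j => hd j _)
    rw [h]
    have := Polynomial.natDegree_add_le_of_degree_le (dE1.trans (Nat.le_add_left a a))
      (natDegree_mul_X_pow_bound (a := a) dD1)
    omega
  rw [h] at h0
  have dD0 : D.natDegree ≤ 0 := by
    refine natDegree_le_of_mul_X_pow (a := a) ?_
    rw [eq_neg_of_add_eq_zero_right h0, Polynomial.natDegree_neg]
    omega
  have hE' : E = -(D * Polynomial.X ^ a) := eq_neg_of_add_eq_zero_left h0
  have hB' : B = - (2 * D * Polynomial.X ^ a) := by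
    have : B = E - D * Polynomial.X ^ a := by rw [hE]; ring
    rw [this, hE']; ring
  have hA' : A = D * (Polynomial.X ^ a) ^ 2 := by
    rw [eq_neg_of_add_eq_zero_left r0, hE']; ring
  obtain ⟨c, hc⟩ := Polynomial.natDegree_eq_zero.1 (Nat.le_zero.1 dD0)
  refine ⟨c, sub_eq_zero.1 (dehom_inj (Submodule.sub_mem _ hF
    (Submodule.smul_mem _ c (curveT_sq_mem a))) ?_)⟩
  rw [map_sub, map_smul, map_pow, dehom_curveT, e, hA', hB', Algebra.smul_def,
    Polynomial.algebraMap_apply, Polynomial.algebraMap_eq, hc]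
  simp only [map_neg, map_mul, map_pow, map_ofNat]
  ring

/-- Example ex1 (precise form): for every `a ≥ 1` there exist points
`a₁, …, a_{2a+1} ∈ (ℂ²∖{0}) × (ℂ²∖{0})` such that the space of bihomogeneous polynomials of
bidegree `(2a, 2)` vanishing to order `≥ 2` at every point has dimension exactly `1`;
the unique (up to scalar) such polynomial is `T ^ 2`, where `T` is the unique (up to scalar)
bidegree-`(a, 1)` form vanishing at all the points. -/
theorem P1xP1_bidegree_2a_2_defect_is_one (a : ℕ) (ha : 1 ≤ a) :
    ∃ p : Fin (2 * a + 1) → (i : Fin 2) → Fin (biDims i + 1) → ℂ,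
      (∀ j i, p j i ≠ 0) ∧
      Module.finrank ℂ (doubleVanishingSpace biDims ![2 * a, 2] p) = 1 ∧
      ∃ T, T ≠ 0 ∧ T ∈ multiHomog biDims ![a, 1] ∧
        (∀ j, T ∈ vanishingAt biDims (p j)) ∧
        (∀ T', T' ∈ multiHomog biDims ![a, 1] → (∀ j, T' ∈ vanishingAt biDims (p j)) →
          ∃ c : ℂ, T' = c • T) ∧
        doubleVanishingSpace biDims ![2 * a, 2] p = Submodule.span ℂ {T ^ 2} := by
  have hnd : ∀ t : ℂ, ∀ F : MvPolynomial VV ℂ,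
      F ∈ doubleVanishingAt biDims (affPt t (t ^ a)) ↔
        (restr a F).eval t = 0 ∧ ∀ v, (restr a (pderiv v F)).eval t = 0 := by
    intro t F
    simp only [doubleVanishingAt, Submodule.mem_inf, Submodule.mem_iInf, Submodule.mem_comap,
      mem_vanishingAt_iff]
    rfl
  have hspan : doubleVanishingSpace biDims ![2 * a, 2]
      (fun j : Fin (2 * a + 1) => affPt ((j : ℕ) : ℂ) (((j : ℕ) : ℂ) ^ a)) =
      Submodule.span ℂ {curveT a ^ 2} := by
    ext F
    rw [Submodule.mem_span_singleton]
    simp only [doubleVanishingSpace, Submodule.mem_inf, Submodule.mem_iInf, hnd]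
    constructor
    · rintro ⟨h1, h2⟩
      obtain ⟨c, hc⟩ := uniq_sq a F h1 (fun j => (h2 j).1) (fun j => (h2 j).2)
      exact ⟨c, hc.symm⟩
    · rintro ⟨c, rfl⟩
      refine ⟨Submodule.smul_mem _ _ (curveT_sq_mem a), fun j => ⟨?_, fun v => ?_⟩⟩
      · simp [restr_curveT]
      · simp [restr_curveT, sq]
  have hT := curveT_ne_zero a
  refine ⟨fun j : Fin (2 * a + 1) => affPt ((j : ℕ) : ℂ) (((j : ℕ) : ℂ) ^ a), ?_, ?_,
    curveT a, hT, curveT_mem a, ?_, ?_, hspan⟩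
  · intro j i h
    have h0 := congrFun h (0 : Fin 2)
    fin_cases i
    · exact one_ne_zero (α := ℂ) h0
    · exact one_ne_zero (α := ℂ) h0
  · rw [hspan]
    exact finrank_span_singleton (pow_ne_zero 2 hT)
  · intro j
    rw [mem_vanishingAt_iff, restr_curveT, Polynomial.eval_zero]
  · intro T' h1 h2
    exact uniq_T a T' h1 fun j => (mem_vanishingAt_iff a _ T').1 (h2 j)
end
end

section
/- Let n, t, α, z be integers with n ≥ 3, t ≥ 2, α ≥ 2n² and z ≥ 1. Set e₁ = ⌊α/n⌋, f₁ = α − n·e₁ and Δ = (t+1)α + n − (n+1)z. If Δ ≥ 0 (i.e., (n+1)z ≤ (t+1)α + n), then Δ + z ≥ t·f₁ + e₁ + n. -/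
/-- Claim 1 in the proof of Theorem i1: with `n ≥ 3`, `t ≥ 2`, `α ≥ 2n²`, `z ≥ 1`,
`e₁` and `f₁` the quotient and remainder of the division of `α` by `n`, and
`Δ = (t+1)α + n - (n+1)z ≥ 0`, one has `Δ + z ≥ t·f₁ + e₁ + n`. -/
theorem claim1 (n t α z e₁ f₁ Δ : ℤ) (hn : 3 ≤ n) (ht : 2 ≤ t)
    (hα : 2 * n ^ 2 ≤ α) (hz : 1 ≤ z)
    (hdiv : α = n * e₁ + f₁) (hf₁0 : 0 ≤ f₁) (hf₁ : f₁ < n)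
    (hΔ : Δ = (t + 1) * α + n - (n + 1) * z) (hΔ0 : 0 ≤ Δ) :
    Δ + z ≥ t * f₁ + e₁ + n := by
  have he : 2 * n ≤ e₁ := by
    by_contra h
    have h1 : e₁ ≤ 2 * n - 1 := by omega
    have h2 : n * e₁ ≤ n * (2 * n - 1) := mul_le_mul_of_nonneg_left h1 (by omega)
    nlinarith
  have h1 : n + 1 ≤ e₁ - f₁ := by omega
  have h2 : 2 * n - 1 ≤ t * n - 1 := by nlinarith
  have h3 : (2 * n - 1) * (n + 1) ≤ (t * n - 1) * (e₁ - f₁) :=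
    mul_le_mul h2 h1 (by omega) (by omega)
  have h4 : 0 ≤ n * Δ := mul_nonneg (by omega) hΔ0
  have h5 : (n + 1) * (Δ + z - (t * f₁ + e₁ + n))
      = n * Δ + (t * n - 1) * (e₁ - f₁) - n ^ 2 := by
    have : (n + 1) * z = (t + 1) * (n * e₁ + f₁) + n - Δ := by rw [hΔ, hdiv]; ring
    linear_combination this
  have h6 : 0 ≤ (n + 1) * (Δ + z - (t * f₁ + e₁ + n)) := by rw [h5]; nlinarith
  have h7 := nonneg_of_mul_nonneg_right h6 (by omega : 0 < n + 1)
  linarith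
end
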